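/- arXiv:1801.07458 — 2 statements merged into one kernel-verified Lean document; each statement's English description precedes it below -/
import Mathlib

section
/- Let u be a pattern (nonempty word) that is not blocking, and let α(u) be the number of distinct letters occurring in u. Then u is (2·α(u)+4)-avoidable; that is, there are infinitely many words over an alphabet with 2·α(u)+4 letters that avoid u. In particular m(u) ≤ 2·α(u)+4, where m(u) is the least n such that u is n-avoidable. -/
/-- A word `w` *encounters* the pattern `u` if some letterwise substitution `h`
(sending each letter of `u` to a nonempty word) maps `u` onto a factor
(contiguous subword) of `w`. -/
def Encounters {Y B : Type*} (u : List Y) (w : List B) : Prop :=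
  ∃ h : Y → List B, (∀ y ∈ u, h y ≠ []) ∧ u.flatMap h <:+: w

/-- A word `w` *avoids* the pattern `u` if it does not encounter it. -/
def Avoids {Y B : Type*} (u : List Y) (w : List B) : Prop := ¬ Encounters u w

/-- A pattern `u` is `n`-avoidable if infinitely many words over an
`n`-letter alphabet avoid `u`. -/
def NAvoidable {Y : Type*} (u : List Y) (n : ℕ) : Prop :=
  {w : List (Fin n) | Avoids u w}.Infinite

/-- A pattern `u` is *blocking* (unavoidable) if over every finite alphabet
only finitely many words avoid `u`. -/
def Blocking {Y : Type*} (u : List Y) : Prop :=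
  ∀ n : ℕ, {w : List (Fin n) | Avoids u w}.Finite

/-! Every long word over a finite alphabet encounters a given Zimin word, so it suffices that `u`
is encountered by some Zimin word. This property is inherited from shorter patterns: if the
boundaries between the letters of `u` can be labelled so that each letter always runs between the
same two labels, and `u` minus some letters that run from a smaller to a larger label is
encountered by a Zimin word, then so is `u`.

The letter at `i` of an infinite word encodes a triangle wave of half-period `h = α(u) + 1` and one
bit, so that `2 * h + 2 = 2 * α(u) + 4` letters suffice. At a position of 2-adic valuation `s` the
bit is the parity of the block of length `2 * h * 2 ^ s` containing it. If a prefix encounters `u`,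
the wave allows one to delete letters of length one until the occurrences of each remaining letter
agree modulo `2 * h`. Then letters are deleted from short to long: once those of length less than
`2 ^ (s + 1)` are gone, the bit lifts agreement modulo `2 * h * 2 ^ s` to twice that modulus. As `u`
has fewer than `h` distinct letters, the deleted ones never cover a whole period, and cutting the
cycle at an uncovered position gives the labels for the next deletion. In the end no letter is left,
so `u` is blocking. -/

theorem Encounters.mono {Y B : Type*} {u : List Y} {v w : List B} (h : Encounters u v)
    (hvw : v <:+: w) : Encounters u w :=
  let ⟨f, hf, hfv⟩ := h
  ⟨f, hf, hfv.trans hvw⟩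

theorem Encounters.trans {X Y B : Type*} {u : List X} {v : List Y} {w : List B}
    (huv : Encounters u v) (hvw : Encounters v w) : Encounters u w := by
  obtain ⟨f, hf, a, b, rfl⟩ := huv
  obtain ⟨g, hg, hgw⟩ := hvw
  refine ⟨fun x => (f x).flatMap g, fun x hx => ?_, ?_⟩
  · obtain ⟨y, hy⟩ := List.exists_mem_of_ne_nil _ (hf x hx)
    have hyv : y ∈ a ++ u.flatMap f ++ b :=
      List.mem_append_left _ (List.mem_append_right _ (List.mem_flatMap.2 ⟨x, hx, hy⟩))
    exact fun h => hg y hyv (List.flatMap_eq_nil_iff.1 h y hy)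
  · refine List.IsInfix.trans ⟨a.flatMap g, b.flatMap g, ?_⟩ hgw
    simp only [List.flatMap_append, List.flatMap_assoc]

theorem Encounters.nil {Y B : Type*} (w : List B) : Encounters ([] : List Y) w :=
  ⟨fun _ => [], by simp, by simp⟩

/-! ### Zimin words -/

/-- The Zimin words `ε, 0, 010, 0102010, …`; each is a universal unavoidable pattern on its
letters. -/
def zimin : ℕ → List ℕ
  | 0 => []
  | k + 1 => zimin k ++ k :: zimin k

theorem lt_of_mem_zimin {k x : ℕ} (h : x ∈ zimin k) : x < k := by
  induction k with
  | zero => simp [zimin] at h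
  | succ k ih => grind [zimin]

theorem le_length_zimin (k : ℕ) : k ≤ (zimin k).length := by
  induction k with
  | zero => exact Nat.zero_le _
  | succ k ih => grind [zimin]

theorem zimin_add (m k : ℕ) :
    zimin (m + k) = ((zimin k).flatMap fun c => zimin m ++ [c + m]) ++ zimin m := by
  induction k with
  | zero => simp [zimin]
  | succ k ih => simp [zimin, ih, Nat.add_comm]

theorem flatMap_append_take_isInfix_zimin {m k : ℕ} {w : List ℕ} (hw : w <:+: zimin k) (b : ℕ) :
    (w.flatMap fun c => zimin m ++ [c + m]) ++ (zimin m).take b <:+: zimin (m + k) := by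
  obtain ⟨c, d, hcd⟩ := hw
  let β (c : ℕ) : List ℕ := zimin m ++ [c + m]
  have hzimin : zimin (m + k) = c.flatMap β ++ (w.flatMap β ++ (d.flatMap β ++ zimin m)) := by
    rw [zimin_add, ← hcd]
    simp only [List.flatMap_append, List.append_assoc, β]
  have htake : (zimin m).take b <+: d.flatMap β ++ zimin m := by
    refine (List.take_prefix _ _).trans ?_
    cases d <;> simp [β]
  rw [hzimin]
  exact (List.prefix_append_right_inj _ |>.2 htake).isInfix.trans
    (List.suffix_append _ _).isInfix

theorem Encounters.zimin_succ {B : Type*} {k : ℕ} {b m : List B} (hb : Encounters (zimin k) b)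
    (hm : m ≠ []) : Encounters (zimin (k + 1)) (b ++ m ++ b) := by
  obtain ⟨h, hne, s, t, rfl⟩ := hb
  let h' := Function.update h k (t ++ m ++ s)
  have h'_eq : ∀ x ∈ zimin k, h' x = h x := fun x hx =>
    Function.update_of_ne (lt_of_mem_zimin hx).ne _ _
  have h'_self : h' k = t ++ m ++ s := Function.update_self ..
  refine ⟨h', fun x hx => ?_, s, t, ?_⟩
  · obtain hx | rfl : x ∈ zimin k ∨ x = k := by grind [zimin]
    · exact h'_eq x hx ▸ hne x hx
    · simp [h'_self, hm]
  · simp [zimin, List.flatMap_congr h'_eq, h'_self]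

theorem append_gap_append_isInfix {B : Type*} (w : List B) (i l g : ℕ) :
    (w.drop i).take l ++ (w.drop (i + l)).take g ++ (w.drop (i + l + g)).take l <:+: w := by
  rw [← List.drop_drop, ← List.take_add, Nat.add_assoc, ← List.drop_drop, ← List.take_add]
  exact (List.take_prefix _ _).isInfix.trans (List.drop_suffix _ _).isInfix

theorem exists_gap_repetition {B : Type*} [Fintype B] {l : ℕ} {w : List B}
    (hw : (l + 1) * (Fintype.card B ^ l + 1) ≤ w.length) :
    ∃ b m : List B, b.length = l ∧ m ≠ [] ∧ b ++ m ++ b <:+: w := by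
  have hwindow (i : Fin (Fintype.card B ^ l + 1)) : (l + 1) * i + l < w.length :=
    (Nat.mul_le_mul_left (l + 1) i.2).trans hw
  let window (i : Fin (Fintype.card B ^ l + 1)) : List.Vector B l :=
    ⟨(w.drop ((l + 1) * i)).take l, by grind⟩
  obtain ⟨i, j, hij, heq⟩ := Fintype.exists_ne_map_eq_of_card_lt window (by simp [card_vector])
  wlog hlt : i < j generalizing i j
  · exact this j i hij.symm heq.symm (lt_of_le_of_ne (not_lt.1 hlt) hij.symm)
  obtain ⟨g, hg⟩ : ∃ g, (l + 1) * (j : ℕ) = (l + 1) * i + l + (g + 1) := by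
    have : (l + 1) * (i + 1 : ℕ) ≤ (l + 1) * j := Nat.mul_le_mul_left _ hlt
    exact ⟨(l + 1) * j - (l + 1) * (i + 1), by grind⟩
  refine ⟨(window i).1, (w.drop ((l + 1) * i + l)).take (g + 1), (window i).2, ?_, ?_⟩
  · have := hwindow j
    exact List.ne_nil_of_length_pos (by grind)
  · nth_rw 2 [heq]
    simpa only [window, hg] using append_gap_append_isInfix w ((l + 1) * i) l (g + 1)

theorem exists_length_encounters_zimin (B : Type*) [Finite B] (k : ℕ) :
    ∃ l, ∀ w : List B, l ≤ w.length → Encounters (zimin k) w := by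
  cases nonempty_fintype B
  induction k with
  | zero => exact ⟨0, fun w _ => Encounters.nil w⟩
  | succ k ih =>
    obtain ⟨l, hl⟩ := ih
    refine ⟨(l + 1) * (Fintype.card B ^ l + 1), fun w hw => ?_⟩
    obtain ⟨b, m, hb, hm, hbw⟩ := exists_gap_repetition hw
    exact ((hl b hb.ge).zimin_succ hm).mono hbw

/-- The pattern `u` is encountered by some Zimin word; this is a certificate that `u` is
blocking. -/
def ZiminEncountered {Y : Type*} (u : List Y) : Prop := ∃ k, Encounters u (zimin k)

theorem ZiminEncountered.blocking {Y : Type*} {u : List Y} (hu : ZiminEncountered u) :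
    Blocking u := by
  obtain ⟨k, hk⟩ := hu
  intro n
  obtain ⟨l, hl⟩ := exists_length_encounters_zimin (Fin n) k
  refine (List.finite_length_lt (Fin n) l).subset fun w hw => ?_
  by_contra hlen
  exact hw (hk.trans (hl w (not_lt.1 hlen)))

/-! ### Deleting letters of a pattern -/

section Walk

variable {V Y B : Type*} {s e : Y → V}

/-- Regard each letter `x` as an edge from `s x` to `e x` of a directed graph:
`IsWalk s e a u b` says that the word `u` is a walk from `a` to `b`. -/
def IsWalk (s e : Y → V) : V → List Y → V → Prop
  | a, [], b => a = b
  | a, x :: u, b => a = s x ∧ IsWalk s e (e x) u b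

theorem IsWalk.append_flatMap {X : V → List B} {f N : Y → List B} {u : List Y} {a b : V}
    (hu : IsWalk s e a u b) (hf : ∀ x ∈ u, X (s x) ++ f x = N x ++ X (e x)) :
    X a ++ u.flatMap f = u.flatMap N ++ X b := by
  induction u generalizing a with
  | nil =>
    obtain rfl : a = b := hu
    simp
  | cons x u ih =>
    obtain ⟨rfl, hu⟩ := hu
    rw [List.flatMap_cons, List.flatMap_cons, ← List.append_assoc, hf x List.mem_cons_self,
      List.append_assoc, ih hu fun y hy => hf y (List.mem_cons_of_mem x hy), List.append_assoc]

end Walk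

theorem flatMap_filter {Y B : Type*} (R : Y → Bool) (f : Y → List B) (u : List Y) :
    (u.filter R).flatMap f = u.flatMap fun x => if R x then f x else [] := by
  induction u with
  | nil => rfl
  | cons x u ih => cases h : R x <;> simp [h, ih]

/-- Write `X` for a large Zimin word. A kept letter is sent to its image under an encounter of
`u.filter R`, with a copy of `X` inserted at each letter; a deleted letter `x` fits inside `X`, as
the factor from position `s x` to position `e x`. The walk makes these images fit together. -/
theorem ZiminEncountered.of_filter {Y : Type*} {s e : Y → ℕ} {u : List Y} {a b : ℕ}
    (hu : IsWalk s e a u b) (R : Y → Bool) (hlt : ∀ x ∈ u, R x = false → s x < e x)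
    (hR : ZiminEncountered (u.filter R)) : ZiminEncountered u := by
  classical
  obtain ⟨k, g, hg, hgk⟩ := hR
  obtain ⟨m, hm⟩ : ∃ m, ∀ x ∈ u, s x < m := ⟨u.toFinset.sup s + 1, fun x hx =>
    Nat.lt_succ_of_le (Finset.le_sup (List.mem_toFinset.2 hx))⟩
  let X := zimin m
  let β (c : ℕ) : List ℕ := X ++ [c + m]
  let N (x : Y) : List ℕ := if R x then (g x).flatMap β else []
  let f (x : Y) : List ℕ := (N x ++ X.take (e x)).drop (s x)
  have hX : ∀ x ∈ u, s x < X.length := fun x hx => (hm x hx).trans_le (le_length_zimin m)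
  have hN : ∀ x ∈ u, s x < (N x ++ X.take (e x)).length ∧
      X.take (s x) <+: N x ++ X.take (e x) := by
    intro x hx
    cases hRx : R x with
    | false =>
      have := hlt x hx hRx
      have := hX x hx
      simp only [N, hRx, Bool.false_eq_true, if_false, List.nil_append, List.length_take]
      exact ⟨by omega, List.take_prefix_take_left (by omega)⟩
    | true =>
      obtain ⟨y, v, hy⟩ := List.exists_cons_of_ne_nil (hg x (List.mem_filter.2 ⟨hx, hRx⟩))
      have hNx : N x = X ++ ([y + m] ++ v.flatMap β) := by simp [N, hRx, hy, β]
      rw [hNx, List.append_assoc]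
      refine ⟨(hX x hx).trans_le (by simp), (List.take_prefix _ _).trans (List.prefix_append _ _)⟩
  have hf : ∀ x ∈ u, X.take (s x) ++ f x = N x ++ X.take (e x) := by
    intro x hx
    have htake : X.take (s x) = (N x ++ X.take (e x)).take (s x) := by
      rw [List.prefix_iff_eq_take.1 (hN x hx).2, List.length_take_of_le (hX x hx).le]
    rw [htake, List.take_append_drop]
  have hflat : X.take a ++ u.flatMap f = ((u.filter R).flatMap g).flatMap β ++ X.take b := by
    rw [hu.append_flatMap (X := X.take) hf, List.flatMap_assoc, flatMap_filter]
  refine ⟨m + k, f, fun x hx => ?_, ?_⟩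
  · exact List.ne_nil_of_length_pos (List.length_drop ▸ Nat.sub_pos_of_lt (hN x hx).1)
  · refine (List.suffix_append (X.take a) _).isInfix.trans ?_
    exact hflat ▸ flatMap_append_take_isInfix_zimin hgk b

/-! ### Layouts of a pattern -/

section Layout

variable {Y α β : Type*} {ℓ : Y → ℕ} {p : ℕ} {u : List Y} {x : Y} {i : ℕ}

/-- Lay the letters of `u` out on the positions `p, p + 1, …`, each letter `y` taking `ℓ y` of
them: `OccursAt ℓ p u x i` says that an occurrence of the letter `x` starts at position `i`. -/
def OccursAt (ℓ : Y → ℕ) (p : ℕ) (u : List Y) (x : Y) (i : ℕ) : Prop :=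
  ∃ u₁ u₂, u = u₁ ++ x :: u₂ ∧ i = p + (u₁.map ℓ).sum

theorem OccursAt.head (ℓ : Y → ℕ) (p : ℕ) (u : List Y) (x : Y) : OccursAt ℓ p (x :: u) x p :=
  ⟨[], u, rfl, by simp⟩

theorem OccursAt.cons (y : Y) (h : OccursAt ℓ (p + ℓ y) u x i) : OccursAt ℓ p (y :: u) x i := by
  obtain ⟨u₁, u₂, rfl, rfl⟩ := h
  exact ⟨y :: u₁, u₂, rfl, by simp [Nat.add_assoc]⟩

theorem OccursAt.mem (h : OccursAt ℓ p u x i) : x ∈ u := by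
  obtain ⟨u₁, u₂, rfl, -⟩ := h
  simp

theorem exists_occursAt (ℓ : Y → ℕ) (p : ℕ) (h : x ∈ u) : ∃ i, OccursAt ℓ p u x i := by
  obtain ⟨u₁, u₂, rfl⟩ := List.append_of_mem h
  exact ⟨_, u₁, u₂, rfl, rfl⟩

/-- In the layout of `u`, all occurrences of a letter read the same factor of the infinite
word `f`. -/
def Consistent (ℓ : Y → ℕ) (p : ℕ) (u : List Y) (f : ℕ → α) : Prop :=
  ∀ ⦃x i j⦄, OccursAt ℓ p u x i → OccursAt ℓ p u x j → ∀ t < ℓ x, f (i + t) = f (j + t)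

theorem Consistent.comp {f : ℕ → α} (hf : Consistent ℓ p u f) (g : α → β) :
    Consistent ℓ p u fun i => g (f i) :=
  fun _ _ _ hi hj t ht => congrArg g (hf hi hj t ht)

theorem getElem?_append_flatMap_append {h : Y → List α} {a b : List α}
    (hi : OccursAt (fun y => (h y).length) a.length u x i) {t : ℕ} (ht : t < (h x).length) :
    (a ++ u.flatMap h ++ b)[i + t]? = (h x)[t]? := by
  obtain ⟨u₁, u₂, rfl, rfl⟩ := hi
  have hassoc : a ++ (u₁ ++ x :: u₂).flatMap h ++ b =
      (a ++ u₁.flatMap h) ++ (h x ++ (u₂.flatMap h ++ b)) := by simp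
  have hlen : (a ++ u₁.flatMap h).length = a.length + (u₁.map fun y => (h y).length).sum := by
    simp [List.length_flatMap]
  rw [hassoc, List.getElem?_append_right (by omega), hlen, Nat.add_sub_cancel_left,
    List.getElem?_append_left ht]

theorem exists_consistent_of_encounters {f : ℕ → α} {N : ℕ}
    (h : Encounters u ((List.range N).map f)) :
    ∃ ℓ p, (∀ x ∈ u, 0 < ℓ x) ∧ Consistent ℓ p u f := by
  obtain ⟨h, hne, a, b, hab⟩ := h
  have hread : ∀ x i, OccursAt (fun x => (h x).length) a.length u x i → ∀ t < (h x).length,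
      (h x)[t]? = some (f (i + t)) := by
    intro x i hi t ht
    have hget := getElem?_append_flatMap_append (b := b) hi ht
    rw [hab, List.getElem?_eq_getElem ht] at hget
    grind
  refine ⟨fun x => (h x).length, a.length, fun x hx => List.length_pos_iff.2 (hne x hx), ?_⟩
  exact fun x i j hi hj t ht =>
    Option.some.inj ((hread x i hi t ht).symm.trans (hread x j hj t ht))

theorem isWalk_filter {V : Type*} {s e : Y → V} {L : ℕ → V} (A : Y → Bool)
    (hdel : ∀ x i, OccursAt ℓ p u x i → A x = false → L (i + ℓ x) = L i)
    (hkeep : ∀ x i, OccursAt ℓ p u x i → A x → L i = s x ∧ L (i + ℓ x) = e x) :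
    IsWalk s e (L p) (u.filter A) (L (p + (u.map ℓ).sum)) := by
  induction u generalizing p with
  | nil => simp [IsWalk]
  | cons x u ih =>
    have hwalk := ih (fun y i h => hdel y i (h.cons x)) fun y i h => hkeep y i (h.cons x)
    have hx := OccursAt.head ℓ p u x
    rw [List.map_cons, List.sum_cons, ← Nat.add_assoc]
    cases hA : A x with
    | false => rwa [List.filter_cons_of_neg (by simp [hA]), ← hdel x p hx hA]
    | true =>
      obtain ⟨hs, he⟩ := hkeep x p hx hA
      rw [List.filter_cons_of_pos hA]
      exact ⟨hs, he ▸ hwalk⟩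

open scoped Classical in
/-- The pattern that remains of `u` when one keeps only the letters with an occurrence that covers
a position of `T`. -/
noncomputable def survivors (ℓ : Y → ℕ) (p : ℕ) (u : List Y) (T : ℕ → Prop) : List Y :=
  u.filter fun x => ∃ i, OccursAt ℓ p u x i ∧ ∃ t < ℓ x, T (i + t)

theorem mem_survivors {T : ℕ → Prop} :
    x ∈ survivors ℓ p u T ↔ ∃ i, OccursAt ℓ p u x i ∧ ∃ t < ℓ x, T (i + t) := by
  simp only [survivors, List.mem_filter, decide_eq_true_eq, and_iff_right_iff_imp]
  exact fun ⟨_, hi, _⟩ => hi.mem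

theorem survivors_subset {T : ℕ → Prop} : survivors ℓ p u T ⊆ u :=
  List.filter_subset_self _

theorem survivors_mono {T T' : ℕ → Prop} (hT : ∀ i, T' i → T i) :
    survivors ℓ p u T' ⊆ survivors ℓ p u T := by
  intro x hx
  obtain ⟨i, hi, t, ht, h⟩ := mem_survivors.1 hx
  exact mem_survivors.2 ⟨i, hi, t, ht, hT _ h⟩

theorem survivors_eq_self {T : ℕ → Prop} (hℓ : ∀ x ∈ u, 0 < ℓ x) (hT : ∀ i, T i) :
    survivors ℓ p u T = u := by
  classical
  refine List.filter_eq_self.2 fun x hx => ?_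
  obtain ⟨i, hi⟩ := exists_occursAt ℓ p hx
  exact decide_eq_true ⟨i, hi, 0, hℓ x hx, hT _⟩

open scoped Classical in
theorem filter_survivors {T T' : ℕ → Prop} (hT : ∀ i, T' i → T i) :
    (survivors ℓ p u T).filter (· ∈ survivors ℓ p u T') = survivors ℓ p u T' := by
  conv_rhs => rw [survivors]
  conv_lhs => arg 2; rw [survivors]
  rw [List.filter_filter]
  refine List.filter_congr fun x _ => ?_
  rw [← Bool.decide_and, decide_eq_decide, ← mem_survivors, ← mem_survivors]
  exact and_iff_left_of_imp fun h => survivors_mono hT h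

theorem rel_add_of_rel_succ {r : α → α → Prop} [Std.Refl r] [IsTrans α r] {L : ℕ → α} {i k : ℕ}
    (h : ∀ t < k, r (L (i + t)) (L (i + t + 1))) : r (L i) (L (i + k)) := by
  induction k with
  | zero => exact refl _
  | succ k ih =>
    exact _root_.trans (ih fun t ht => h t (ht.trans k.lt_succ_self)) (h k k.lt_succ_self)

/-- Cut the layout at the letter boundaries and label them by `L`: the surviving pattern becomes a
walk, and the letters that survive for `T` but not for `T'` are strictly increasing edges of it. -/
theorem ZiminEncountered.of_survivors {T T' : ℕ → Prop} (hT : ∀ i, T' i → T i) (L : ℕ → ℕ)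
    (hconst : ∀ i, ¬ T i → L (i + 1) = L i) (hlt : ∀ i, T i → ¬ T' i → L i < L (i + 1))
    (hL : ∀ x ∈ survivors ℓ p u T, ∀ i j, OccursAt ℓ p u x i → OccursAt ℓ p u x j →
      L i = L j ∧ L (i + ℓ x) = L (j + ℓ x))
    (h : ZiminEncountered (survivors ℓ p u T')) : ZiminEncountered (survivors ℓ p u T) := by
  classical
  choose! st hst using fun x (hx : x ∈ u) => exists_occursAt ℓ p hx
  have hle : ∀ i, ¬ T' i → L i ≤ L (i + 1) := fun i hi => by
    by_cases hTi : T i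
    · exact (hlt i hTi hi).le
    · exact (hconst i hTi).ge
  have hwalk : IsWalk (fun x => L (st x)) (fun x => L (st x + ℓ x)) (L p) (survivors ℓ p u T)
      (L (p + (u.map ℓ).sum)) := by
    refine isWalk_filter _ (fun x i hi hx => ?_) fun x i hi hx => ?_
    · exact rel_add_of_rel_succ (r := fun a b => b = a) fun t ht => hconst _ fun h =>
        of_decide_eq_false hx ⟨i, hi, t, ht, h⟩
    · exact hL x (mem_survivors.2 (of_decide_eq_true hx)) i _ hi (hst x hi.mem)
  refine ZiminEncountered.of_filter hwalk (· ∈ survivors ℓ p u T') (fun x hx hx' => ?_)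
    ((filter_survivors hT).symm ▸ h)
  obtain ⟨i, hi, t, ht, hTt⟩ := mem_survivors.1 hx
  have hdel : ∀ t < ℓ x, ¬ T' (i + t) := fun t ht h =>
    of_decide_eq_false hx' (mem_survivors.2 ⟨i, hi, t, ht, h⟩)
  obtain ⟨hs, he⟩ := hL x hx i _ hi (hst x hi.mem)
  rw [← hs, ← he]
  calc
    L i ≤ L (i + t) := rel_add_of_rel_succ fun r hr => hle _ (hdel r (hr.trans ht))
    _ < L (i + t + 1) := hlt _ hTt (hdel t ht)
    _ ≤ L (i + t + 1 + (ℓ x - (t + 1))) := by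
      refine rel_add_of_rel_succ fun r hr => hle _ ?_
      rw [Nat.add_assoc, Nat.add_assoc]
      exact hdel _ (by omega)
    _ = L (i + ℓ x) := by congr 1; omega

end Layout

/-! ### The triangle wave -/

/-- The triangle wave `0, 1, …, h, h - 1, …, 1, 0, 1, …` of period `2 * h`. -/
def zigzag (h i : ℕ) : ℕ := min (i % (2 * h)) (2 * h - i % (2 * h))

section Zigzag

variable {h i j q v : ℕ}

theorem zigzag_le (h i : ℕ) : zigzag h i ≤ h := by
  unfold zigzag
  omega

theorem periodic_zigzag (h : ℕ) : Function.Periodic (zigzag h) (2 * h) := fun i => by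
  simp [zigzag]

theorem zigzag_rise (hh : 0 < h) (hv : v ≤ h) : zigzag h (2 * h * q + v) = v := by
  rw [zigzag, Nat.mul_add_mod, Nat.mod_eq_of_lt (by omega)]
  omega

theorem zigzag_fall (hv : v ≤ h) : zigzag h (2 * h * q + (2 * h - v)) = v := by
  obtain rfl | hv' := Nat.eq_zero_or_pos v
  · simp [zigzag]
  · rw [zigzag, Nat.mul_add_mod, Nat.mod_eq_of_lt (by omega)]
    omega

theorem eq_rise_or_eq_fall (hh : 0 < h) (i : ℕ) : ∃ q, ∃ v ≤ h,
    i = 2 * h * q + v ∨ i = 2 * h * q + (2 * h - v) := by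
  have hdiv := Nat.div_add_mod i (2 * h)
  have hlt := Nat.mod_lt i (show 0 < 2 * h by omega)
  refine ⟨i / (2 * h), zigzag h i, zigzag_le h i, ?_⟩
  unfold zigzag
  omega

theorem zigzag_succ (hh : 0 < h) : zigzag h (i + 1) =
    if i % (2 * h) < h then i % (2 * h) + 1 else 2 * h - (i % (2 * h) + 1) := by
  have hlt := Nat.mod_lt i (show 0 < 2 * h by omega)
  rw [zigzag, Nat.add_mod_eq_ite, Nat.mod_eq_of_lt (show 1 < 2 * h by omega)]
  split_ifs <;> omega

theorem modEq_of_zigzag_eq (hh : 0 < h) (hij : zigzag h i = zigzag h j)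
    (hij' : zigzag h (i + 1) = zigzag h (j + 1)) : i ≡ j [MOD 2 * h] := by
  have hi := Nat.mod_lt i (show 0 < 2 * h by omega)
  have hj := Nat.mod_lt j (show 0 < 2 * h by omega)
  rw [zigzag_succ hh, zigzag_succ hh] at hij'
  unfold zigzag at hij
  unfold Nat.ModEq
  split_ifs at hij' <;> omega

theorem modEq_of_zigzag_eq_of_extremal (hh : 0 < h) (hij : zigzag h i = zigzag h j)
    (hi : zigzag h i = 0 ∨ zigzag h i = h) : i ≡ j [MOD 2 * h] := by
  have hi' := Nat.mod_lt i (show 0 < 2 * h by omega)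
  have hj' := Nat.mod_lt j (show 0 < 2 * h by omega)
  unfold zigzag at hij hi
  unfold Nat.ModEq
  omega

theorem count_congr {P Q : ℕ → Prop} [DecidablePred P] [DecidablePred Q] {n : ℕ}
    (hPQ : ∀ k < n, P k ↔ Q k) : Nat.count P n = Nat.count Q n := by
  rw [Nat.count_eq_card_filter_range, Nat.count_eq_card_filter_range,
    Finset.filter_congr fun k hk => hPQ k (Finset.mem_range.1 hk)]

variable {V : ℕ → Prop} [DecidablePred V]

theorem count_zigzag_rise (hh : 0 < h) (hv : v ≤ h) :
    Nat.count (fun j => V (zigzag h j)) (2 * h * q + v) =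
      Nat.count (fun j => V (zigzag h j)) (2 * h * q) + Nat.count V v := by
  rw [Nat.count_add]
  congr 1
  exact count_congr fun k hk => by rw [zigzag_rise hh (hk.le.trans hv)]

theorem count_zigzag_fall (hh : 0 < h) (hV : V h) (hv : v ≤ h) :
    Nat.count (fun j => V (zigzag h j)) (2 * h * q + (2 * h - v)) + Nat.count V (v + 1) =
      Nat.count (fun j => V (zigzag h j)) (2 * h * q) + 2 * Nat.count V h + 1 := by
  induction hv using Nat.decreasingInduction with
  | self =>
    have hrise := count_zigzag_rise (V := V) (q := q) hh le_rfl
    rw [show 2 * h - h = h by omega, hrise, Nat.count_succ, if_pos hV]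
    ring
  | of_succ v hv ih =>
    have hpos : 2 * h * q + (2 * h - v) = 2 * h * q + (2 * h - (v + 1)) + 1 := by omega
    rw [Nat.count_succ V (v + 1), ← Nat.add_assoc] at ih
    rw [hpos, Nat.count_succ, zigzag_fall hv, ← ih]
    ring

theorem count_zigzag_mul (hh : 0 < h) (hV₀ : V 0) (hV : V h) :
    Nat.count (fun j => V (zigzag h j)) (2 * h * q) = q * (2 * Nat.count V h) := by
  induction q with
  | zero => simp
  | succ q ih =>
    have hfall := count_zigzag_fall (q := q) hh hV (Nat.zero_le h)
    rw [Nat.sub_zero, ← Nat.mul_add_one, ih, Nat.zero_add, Nat.count_one, if_pos hV₀] at hfall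
    rw [Nat.add_one_mul q]
    omega

theorem count_zigzag_modEq (hh : 0 < h) (hV₀ : V 0) (hV : V h) (hi : V (zigzag h i)) :
    Nat.count (fun j => V (zigzag h j)) i ≡ Nat.count V (zigzag h i) [MOD 2] := by
  obtain ⟨q, v, hv, rfl | rfl⟩ := eq_rise_or_eq_fall hh i
  · rw [zigzag_rise hh hv, count_zigzag_rise hh hv, count_zigzag_mul hh hV₀ hV, Nat.ModEq]
    grind
  · have hfall := count_zigzag_fall (q := q) hh hV hv
    rw [zigzag_fall hv] at hi ⊢
    rw [count_zigzag_mul hh hV₀ hV, Nat.count_succ, if_pos hi] at hfall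
    rw [Nat.ModEq]
    grind

theorem count_zigzag_modEq_of_agree (hh : 0 < h) (hV₀ : V 0) (hV : V h) {l : ℕ}
    (hij : ∀ t < l, zigzag h (i + t) = zigzag h (j + t)) {t : ℕ} (ht : t < l)
    (hVt : V (zigzag h (i + t))) :
    Nat.count (fun k => V (zigzag h k)) i ≡ Nat.count (fun k => V (zigzag h k)) j [MOD 2] ∧
      Nat.count (fun k => V (zigzag h k)) (i + l) ≡
        Nat.count (fun k => V (zigzag h k)) (j + l) [MOD 2] := by
  have hcount : ∀ r ≤ l, Nat.count (fun k => V (zigzag h (i + k))) r =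
      Nat.count (fun k => V (zigzag h (j + k))) r := fun r hr =>
    count_congr fun k hk => by rw [hij k (hk.trans_le hr)]
  have hmid : Nat.count (fun k => V (zigzag h k)) (i + t) ≡
      Nat.count (fun k => V (zigzag h k)) (j + t) [MOD 2] := by
    refine (count_zigzag_modEq hh hV₀ hV hVt).trans ?_
    rw [hij t ht] at hVt ⊢
    exact (count_zigzag_modEq hh hV₀ hV hVt).symm
  have hstart : Nat.count (fun k => V (zigzag h k)) i ≡
      Nat.count (fun k => V (zigzag h k)) j [MOD 2] := by
    rw [Nat.count_add, Nat.count_add, hcount t ht.le] at hmid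
    exact hmid.add_right_cancel' _
  refine ⟨hstart, ?_⟩
  rw [Nat.count_add, Nat.count_add, hcount l le_rfl]
  exact hstart.add_right _

theorem sub_card_le_count_notMem (h : ℕ) (S : Finset ℕ) : h - S.card ≤ Nat.count (· ∉ S) h := by
  rw [Nat.count_eq_card_filter_range, ← Finset.sdiff_eq_filter]
  simpa using Finset.le_card_sdiff S (Finset.range h)

end Zigzag

/-! ### Sieving out the short letters -/

section Sieve

variable {Y : Type*} {ℓ : Y → ℕ} {p h Q K : ℕ} {u : List Y} {T T' : ℕ → Prop}

/-- A symbol `c` is removed from the triangle wave by labelling each position with the parity of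
the number of earlier positions whose symbol is still present: just before every `c` this parity is
the same, so it can be normalised to `0` there, and it is `1` just after. -/
theorem ZiminEncountered.of_survivors_zigzag (hh : 0 < h) (hℓ : ∀ x ∈ u, 0 < ℓ x)
    (hz : Consistent ℓ p u (zigzag h)) {S : Finset ℕ} (hS : S ⊆ Finset.Ioo 0 h)
    (hu : ZiminEncountered (survivors ℓ p u fun i => zigzag h i ∉ S)) : ZiminEncountered u := by
  induction S using Finset.induction_on with
  | empty => rwa [survivors_eq_self hℓ fun i => Finset.notMem_empty _] at hu
  | insert c S _ ih =>
    have hS' : S ⊆ Finset.Ioo 0 h := (Finset.subset_insert c S).trans hS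
    have h₀ : 0 ∉ S := fun hmem => by simpa using hS' hmem
    have hh' : h ∉ S := fun hmem => by simpa using hS' hmem
    let C (i : ℕ) : ℕ := Nat.count (fun j => zigzag h j ∉ S) i
    refine ih hS' (ZiminEncountered.of_survivors (fun i hi hiS => hi (Finset.mem_insert_of_mem hiS))
      (fun i => (C i + Nat.count (· ∉ S) c) % 2) (fun i hi => ?_) (fun i hi hi' => ?_)
      (fun x hx i j hxi hxj => ?_) hu)
    · simp only [C, Nat.count_succ, if_neg hi, Nat.add_zero]
    · have hic : zigzag h i = c :=
        (Finset.mem_insert.1 (not_not.1 hi')).resolve_right hi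
      have hpar : C i % 2 = Nat.count (· ∉ S) c % 2 :=
        hic ▸ count_zigzag_modEq (V := (· ∉ S)) hh h₀ hh' hi
      have hsucc : C (i + 1) = C i + 1 := by simp only [C, Nat.count_succ, if_pos hi]
      omega
    · obtain ⟨k, hxk, t, ht, hkt⟩ := mem_survivors.1 hx
      rw [hz hxk hxi t ht] at hkt
      have hC := count_zigzag_modEq_of_agree (V := (· ∉ S)) hh h₀ hh' (hz hxi hxj) ht hkt
      exact ⟨hC.1.add_right _, hC.2.add_right _⟩

theorem exists_survivors_zigzag_modEq [DecidableEq Y] (hh : 0 < h) (hℓ : ∀ x ∈ u, 0 < ℓ x)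
    (hz : Consistent ℓ p u (zigzag h)) : ∃ S ⊆ Finset.Ioo 0 h,
      S.card + (survivors ℓ p u fun i => zigzag h i ∉ S).toFinset.card ≤ u.toFinset.card ∧
      ∀ x ∈ survivors ℓ p u fun i => zigzag h i ∉ S, ∀ i j,
        OccursAt ℓ p u x i → OccursAt ℓ p u x j → i ≡ j [MOD 2 * h] := by
  choose! st hst using fun x (hx : x ∈ u) => exists_occursAt ℓ p hx
  let D := u.toFinset.filter fun x => ℓ x = 1 ∧ zigzag h (st x) ∈ Finset.Ioo 0 h
  let S := D.image fun x => zigzag h (st x)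
  have hst_eq : ∀ x i, OccursAt ℓ p u x i → zigzag h i = zigzag h (st x) := fun x i hi =>
    hz hi (hst x hi.mem) 0 (hℓ x hi.mem)
  have hdead : ∀ x ∈ D, x ∉ survivors ℓ p u fun i => zigzag h i ∉ S := by
    intro x hx hx'
    obtain ⟨i, hi, t, ht, hiS⟩ := mem_survivors.1 hx'
    obtain rfl : t = 0 := by
      have := (Finset.mem_filter.1 hx).2.1
      omega
    exact hiS (hst_eq x i hi ▸ Finset.mem_image_of_mem _ hx)
  refine ⟨S, ?_, ?_, fun x hx i j hi hj => ?_⟩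
  · exact Finset.image_subset_iff.2 fun x hx => (Finset.mem_filter.1 hx).2.2
  · refine (Nat.add_le_add_right Finset.card_image_le _).trans ?_
    rw [← Finset.card_union_of_disjoint
      (Finset.disjoint_left.2 fun x hx hx' => hdead x hx (List.mem_toFinset.1 hx'))]
    refine Finset.card_le_card (Finset.union_subset (Finset.filter_subset _ _) fun x hx => ?_)
    exact List.mem_toFinset.2 (survivors_subset (List.mem_toFinset.1 hx))
  · have hpos := hℓ x hi.mem
    by_cases hx1 : ℓ x = 1
    · refine modEq_of_zigzag_eq_of_extremal hh (hz hi hj 0 hpos) ?_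
      by_contra hext
      refine hdead x (Finset.mem_filter.2 ⟨List.mem_toFinset.2 hi.mem, hx1, ?_⟩) hx
      have := zigzag_le h i
      rw [← hst_eq x i hi, Finset.mem_Ioo]
      omega
    · exact modEq_of_zigzag_eq hh (hz hi hj 0 hpos) (hz hi hj 1 (by omega))

theorem eq_of_modEq_of_periodic {α : Type*} {f : ℕ → α} (hf : Function.Periodic f Q) {i j : ℕ}
    (hij : i ≡ j [MOD Q]) : f i = f j := by
  rw [← hf.map_mod_nat i, hij, hf.map_mod_nat]

/-- Cut the cycle `ℤ/Q` open just after `c` and count the positions of `T` from there on. -/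
theorem exists_periodic_label [DecidablePred T] (hQ : 0 < Q) (hT : Function.Periodic T Q) (c : ℕ) :
    ∃ L : ℕ → ℕ, Function.Periodic L Q ∧
      ∀ i, ¬ i ≡ c [MOD Q] → L (i + 1) = L i + if T i then 1 else 0 := by
  let m := (c + 1) * (Q - 1)
  have hm : c + 1 + m = (c + 1) * Q := by
    rw [Nat.add_comm, ← Nat.mul_add_one, Nat.sub_add_cancel hQ]
  refine ⟨fun i => Nat.count (fun j => T (c + 1 + j)) ((i + m) % Q), fun i => ?_, fun i hi => ?_⟩
  · simp only [Nat.add_right_comm i Q m, Nat.add_mod_right]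
  have hr : c + 1 + (i + m) % Q ≡ i [MOD Q] := by
    calc c + 1 + (i + m) % Q ≡ c + 1 + (i + m) [MOD Q] := (Nat.mod_modEq _ _).add_left _
      _ = i + (c + 1) * Q := by omega
      _ ≡ i [MOD Q] := by simp [Nat.ModEq]
  have hne : (i + m) % Q + 1 ≠ Q := by
    intro hlast
    rw [Nat.add_right_comm, Nat.add_assoc, hlast] at hr
    exact hi (hr.symm.trans (by simp [Nat.ModEq]))
  have hsucc : (i + 1 + m) % Q = (i + m) % Q + 1 := by
    rw [Nat.add_right_comm, ← Nat.mod_add_mod, Nat.mod_eq_of_lt]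
    exact lt_of_le_of_ne (Nat.mod_lt _ hQ) hne
  simp only [hsucc, Nat.count_succ, eq_of_modEq_of_periodic hT hr]

theorem ZiminEncountered.of_survivors_periodic (hQ : 0 < Q) (hT : Function.Periodic T Q)
    (hT' : Function.Periodic T' Q) (hsub : ∀ i, T' i → T i) {c : ℕ} (hc : T' c)
    (hmod : ∀ x ∈ survivors ℓ p u T, ∀ i j, OccursAt ℓ p u x i → OccursAt ℓ p u x j →
      i ≡ j [MOD Q])
    (hu : ZiminEncountered (survivors ℓ p u T')) : ZiminEncountered (survivors ℓ p u T) := by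
  classical
  obtain ⟨L, hL, hsucc⟩ := exists_periodic_label hQ hT c
  have hcut : ∀ i, ¬ T' i → ¬ i ≡ c [MOD Q] := fun i hi hic =>
    hi ((eq_of_modEq_of_periodic hT' hic).symm ▸ hc)
  refine ZiminEncountered.of_survivors hsub L (fun i hi => ?_) (fun i hi hi' => ?_)
    (fun x hx i j hxi hxj => ?_) hu
  · rw [hsucc i (hcut i (mt (hsub i) hi)), if_neg hi, Nat.add_zero]
  · rw [hsucc i (hcut i hi'), if_pos hi]
    exact Nat.lt_succ_self _
  · have hij := hmod x hx i j hxi hxj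
    exact ⟨eq_of_modEq_of_periodic hL hij, eq_of_modEq_of_periodic hL (hij.add_right _)⟩

section Shrink

variable {x : Y}

/-- Remove from `T` every position congruent modulo `Q` to one that is covered by a surviving
letter of length less than `K`. -/
def shrink (ℓ : Y → ℕ) (p : ℕ) (u : List Y) (Q K : ℕ) (T : ℕ → Prop) (i : ℕ) : Prop :=
  T i ∧ ∀ x ∈ survivors ℓ p u T, ℓ x < K →
    ∀ j, OccursAt ℓ p u x j → ∀ t < ℓ x, ¬ i ≡ j + t [MOD Q]

theorem periodic_shrink (hT : Function.Periodic T Q) :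
    Function.Periodic (shrink ℓ p u Q K T) Q := fun i => by
  simp only [shrink, hT i, Nat.ModEq, Nat.add_mod_right]

theorem le_of_mem_survivors_shrink (hx : x ∈ survivors ℓ p u (shrink ℓ p u Q K T)) :
    K ≤ ℓ x := by
  obtain ⟨i, hi, t, ht, hit⟩ := mem_survivors.1 hx
  by_contra! hlt
  exact hit.2 x (survivors_mono (fun _ => And.left) hx) hlt i hi t ht rfl

theorem card_survivors_shrink_add_le [DecidableEq Y] :
    (survivors ℓ p u (shrink ℓ p u Q K T)).toFinset.card +
      ((survivors ℓ p u T).toFinset.filter (ℓ · < K)).card ≤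
        (survivors ℓ p u T).toFinset.card := by
  rw [← Finset.card_filter_add_card_filter_not (s := (survivors ℓ p u T).toFinset) (ℓ · < K),
    Nat.add_comm]
  refine Nat.add_le_add_left (Finset.card_le_card fun x hx => ?_) _
  rw [List.mem_toFinset] at hx
  exact Finset.mem_filter.2 ⟨List.mem_toFinset.2 (survivors_mono (fun _ => And.left) hx),
    (le_of_mem_survivors_shrink hx).not_gt⟩

theorem count_le_count_shrink_add [DecidableEq Y] [DecidablePred T]
    [DecidablePred (shrink ℓ p u Q K T)]
    (hmod : ∀ x ∈ survivors ℓ p u T, ∀ i j, OccursAt ℓ p u x i → OccursAt ℓ p u x j →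
      i ≡ j [MOD Q]) :
    Nat.count T Q ≤ Nat.count (shrink ℓ p u Q K T) Q +
      K * ((survivors ℓ p u T).toFinset.filter (ℓ · < K)).card := by
  choose! st hst using fun x (hx : x ∈ u) => exists_occursAt ℓ p hx
  let D := (survivors ℓ p u T).toFinset.filter (ℓ · < K)
  let covered (x : Y) : Finset ℕ := (Finset.range (ℓ x)).image fun t => (st x + t) % Q
  have hcover : (Finset.range Q).filter T ⊆
      (Finset.range Q).filter (shrink ℓ p u Q K T) ∪ D.biUnion covered := by
    intro i hi
    obtain ⟨hiQ, hiT⟩ := Finset.mem_filter.1 hi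
    by_cases hi' : shrink ℓ p u Q K T i
    · exact Finset.mem_union_left _ (Finset.mem_filter.2 ⟨hiQ, hi'⟩)
    · simp only [shrink, hiT, true_and, not_forall, not_not] at hi'
      obtain ⟨x, hx, hlt, j, hj, t, ht, hijt⟩ := hi'
      refine Finset.mem_union_right _ (Finset.mem_biUnion.2
        ⟨x, Finset.mem_filter.2 ⟨List.mem_toFinset.2 hx, hlt⟩,
          Finset.mem_image.2 ⟨t, Finset.mem_range.2 ht, ?_⟩⟩)
      have hst_i : st x + t ≡ i [MOD Q] :=
        ((hmod x hx _ _ (hst x hj.mem) hj).add_right t).trans hijt.symm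
      rw [hst_i, Nat.mod_eq_of_lt (Finset.mem_range.1 hiQ)]
  have hcovered : ∀ x ∈ D, (covered x).card ≤ K := fun x hx =>
    (Finset.card_image_le.trans (Finset.card_range _).le).trans (Finset.mem_filter.1 hx).2.le
  rw [Nat.count_eq_card_filter_range, Nat.count_eq_card_filter_range, Nat.mul_comm]
  refine ((Finset.card_le_card hcover).trans (Finset.card_union_le _ _)).trans ?_
  exact Nat.add_le_add_left (Finset.card_biUnion_le_card_mul _ _ _ hcovered) _

end Shrink

variable [DecidableEq Y]

open scoped Classical in
/-- `T` is a `Q`-periodic set of positions such that passing from `u` to its survivors is harmless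
and the occurrences of each survivor agree modulo `Q`; moreover `T` has, in a period, `K` positions
for each survivor and `K` to spare, so that the survivors shorter than `K` cannot exhaust it. -/
structure IsSieve (ℓ : Y → ℕ) (p : ℕ) (u : List Y) (Q K : ℕ) (T : ℕ → Prop) : Prop where
  periodic : Function.Periodic T Q
  modEq : ∀ x ∈ survivors ℓ p u T, ∀ i j, OccursAt ℓ p u x i → OccursAt ℓ p u x j → i ≡ j [MOD Q]
  card_le : K * ((survivors ℓ p u T).toFinset.card + 1) ≤ Nat.count T Q
  of_survivors : ZiminEncountered (survivors ℓ p u T) → ZiminEncountered u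

theorem isSieve_shrink (hT : IsSieve ℓ p u Q K T) (hK : 0 < K) :
    IsSieve ℓ p u Q K (shrink ℓ p u Q K T) := by
  classical
  have hsub : ∀ i, shrink ℓ p u Q K T i → T i := fun _ => And.left
  have hper' := periodic_shrink (ℓ := ℓ) (p := p) (u := u) (K := K) hT.periodic
  have hcard : K * ((survivors ℓ p u (shrink ℓ p u Q K T)).toFinset.card + 1) ≤
      Nat.count (shrink ℓ p u Q K T) Q := by
    have hle := hT.card_le.trans (count_le_count_shrink_add (K := K) hT.modEq)
    have hmul := Nat.mul_le_mul_left K (card_survivors_shrink_add_le (ℓ := ℓ) (p := p) (u := u)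
      (Q := Q) (K := K) (T := T))
    rw [Nat.mul_add] at hle hmul ⊢
    omega
  obtain ⟨c, hcQ, hc⟩ : ∃ c < Q, shrink ℓ p u Q K T c := by
    refine Nat.count_ne_iff_exists.1 (Nat.pos_iff_ne_zero.1 (lt_of_lt_of_le ?_ hcard))
    positivity
  exact {
    periodic := hper'
    modEq := fun x hx => hT.modEq x (survivors_mono hsub hx)
    card_le := hcard
    of_survivors := fun hu => hT.of_survivors <|
      ZiminEncountered.of_survivors_periodic (Nat.zero_lt_of_lt hcQ) hT.periodic hper' hsub hc
        hT.modEq hu }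

theorem IsSieve.double (hT : IsSieve ℓ p u Q K T)
    (hmod : ∀ x ∈ survivors ℓ p u T, ∀ i j, OccursAt ℓ p u x i → OccursAt ℓ p u x j →
      i ≡ j [MOD Q * 2]) : IsSieve ℓ p u (Q * 2) (K * 2) T where
  periodic := fun i => by rw [Nat.mul_two, ← Nat.add_assoc, hT.periodic, hT.periodic]
  modEq := hmod
  card_le := by
    classical
    have hcount : Nat.count T (Q * 2) = Nat.count T Q * 2 := by
      have hshift : ∀ k, T (Q + k) = T k := fun k => Nat.add_comm Q k ▸ hT.periodic k
      simp only [Nat.mul_two, Nat.count_add, hshift]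
    rw [hcount, Nat.mul_right_comm]
    exact Nat.mul_le_mul_right 2 hT.card_le
  of_survivors := hT.of_survivors

/-- The parity of the block of length `P * 2 ^ s` that contains `i`, where `2 ^ s` is the largest
power of two dividing `i`. -/
def scaleBit (P i : ℕ) : ℕ := i / (P * 2 ^ padicValNat 2 i) % 2

theorem scaleBit_lt_two (P i : ℕ) : scaleBit P i < 2 := Nat.mod_lt _ two_pos

theorem scaleBit_eq {P s i : ℕ} (hi : i % 2 ^ (s + 1) = 2 ^ s) :
    scaleBit P i = i / (P * 2 ^ s) % 2 := by
  have hodd : i = 2 ^ s * (2 * (i / 2 ^ (s + 1)) + 1) := by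
    conv_lhs => rw [← Nat.div_add_mod i (2 ^ (s + 1)), hi]
    ring
  have hval : padicValNat 2 i = s := by
    rw [hodd, padicValNat.mul (by positivity) (by omega), padicValNat.prime_pow,
      padicValNat.eq_zero_of_not_dvd (by omega), Nat.add_zero]
  rw [scaleBit, hval]

theorem exists_lt_add_mod_eq {m r : ℕ} (hr : r < m) (i : ℕ) : ∃ t < m, (i + t) % m = r := by
  refine ⟨(r + (m - i % m)) % m, Nat.mod_lt _ (Nat.zero_lt_of_lt hr), ?_⟩
  have hlt := Nat.mod_lt i (Nat.zero_lt_of_lt hr)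
  rw [Nat.add_mod_mod, ← Nat.mod_add_mod, show i % m + (r + (m - i % m)) = r + m by omega,
    Nat.add_mod_right, Nat.mod_eq_of_lt hr]

/-- Among `2 ^ (s + 1)` consecutive positions there is one of 2-adic valuation `s`, and the scale
bit at that position tells apart the two residues modulo `P * 2 ^ s * 2`. -/
theorem modEq_double_of_scaleBit_eq {P s l i j : ℕ} (hP : 2 ∣ P) (hl : 2 ^ (s + 1) ≤ l)
    (hij : i ≡ j [MOD P * 2 ^ s]) (hbit : ∀ t < l, scaleBit P (i + t) = scaleBit P (j + t)) :
    i ≡ j [MOD P * 2 ^ s * 2] := by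
  obtain ⟨t, ht, hti⟩ := exists_lt_add_mod_eq (Nat.pow_lt_pow_right one_lt_two s.lt_succ_self) i
  have htj : (j + t) % 2 ^ (s + 1) = 2 ^ s := by
    rw [← hti]
    refine ((hij.of_dvd ?_).add_right t).symm
    rw [pow_succ, Nat.mul_comm]
    exact Nat.mul_dvd_mul_right hP _
  have hb := hbit t (ht.trans_le hl)
  rw [scaleBit_eq hti, scaleBit_eq htj] at hb
  refine Nat.ModEq.add_right_cancel' t ?_
  have hijt : (i + t) % (P * 2 ^ s) = (j + t) % (P * 2 ^ s) := hij.add_right t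
  rw [Nat.ModEq, Nat.mod_mul (a := P * 2 ^ s), Nat.mod_mul (a := P * 2 ^ s), hb, hijt]

theorem exists_isSieve (hh : u.toFinset.card < h) (hℓ : ∀ x ∈ u, 0 < ℓ x)
    (hz : Consistent ℓ p u (zigzag h)) (hb : Consistent ℓ p u (scaleBit (2 * h))) (s : ℕ) :
    ∃ T, IsSieve ℓ p u (2 * h * 2 ^ s) (2 ^ (s + 1)) T := by
  induction s with
  | zero =>
    obtain ⟨S, hS, hcard, hmod⟩ := exists_survivors_zigzag_modEq (Nat.zero_lt_of_lt hh) hℓ hz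
    refine ⟨fun i => zigzag h i ∉ S, ?_⟩
    simp only [Nat.pow_zero, Nat.mul_one, Nat.zero_add, Nat.pow_one]
    exact {
      periodic := (periodic_zigzag h).comp (· ∉ S)
      modEq := hmod
      card_le := by
        have h₀ : 0 ∉ S := fun hmem => by simpa using hS hmem
        have hh' : h ∉ S := fun hmem => by simpa using hS hmem
        have hcount := count_zigzag_mul (V := (· ∉ S)) (q := 1) (Nat.zero_lt_of_lt hh) h₀ hh'
        have hle := sub_card_le_count_notMem h S
        rw [Nat.mul_one, Nat.one_mul] at hcount
        convert (show 2 * ((survivors ℓ p u fun i => zigzag h i ∉ S).toFinset.card + 1) ≤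
          Nat.count (fun i => zigzag h i ∉ S) (2 * h) by omega)
      of_survivors := ZiminEncountered.of_survivors_zigzag (Nat.zero_lt_of_lt hh) hℓ hz hS }
  | succ s ih =>
    obtain ⟨T, hT⟩ := ih
    rw [pow_succ 2 (s + 1), pow_succ 2 s, ← Nat.mul_assoc, ← pow_succ 2 s]
    refine ⟨_, (isSieve_shrink hT (by positivity)).double fun x hx i j hi hj => ?_⟩
    exact modEq_double_of_scaleBit_eq (dvd_mul_right 2 h) (le_of_mem_survivors_shrink hx)
      (hT.modEq x (survivors_mono (fun _ => And.left) hx) i j hi hj) (hb hi hj)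

theorem ZiminEncountered.of_consistent (hh : u.toFinset.card < h) (hℓ : ∀ x ∈ u, 0 < ℓ x)
    (hz : Consistent ℓ p u (zigzag h)) (hb : Consistent ℓ p u (scaleBit (2 * h))) :
    ZiminEncountered u := by
  let N := u.toFinset.sup ℓ
  obtain ⟨T, hT⟩ := exists_isSieve hh hℓ hz hb N
  have hT' := isSieve_shrink hT (by positivity)
  have hnil : survivors ℓ p u (shrink ℓ p u (2 * h * 2 ^ N) (2 ^ (N + 1)) T) = [] := by
    refine List.eq_nil_iff_forall_not_mem.2 fun x hx => ?_
    have hlong := le_of_mem_survivors_shrink hx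
    have hshort : ℓ x ≤ N := Finset.le_sup (List.mem_toFinset.2 (survivors_subset hx))
    exact absurd (hlong.trans hshort) (Nat.lt_two_pow_self.trans
      (Nat.pow_lt_pow_right one_lt_two N.lt_succ_self)).not_ge
  exact hT'.of_survivors (hnil ▸ ⟨0, Encounters.nil _⟩)

end Sieve

/-- The infinite word over `2 * h + 2` letters whose letter at `i` encodes the pair formed by the
triangle wave of half-period `h` and the scale bit for its period. -/
def zigzagWord (h i : ℕ) : Fin (2 * h + 2) :=
  ⟨2 * zigzag h i + scaleBit (2 * h) i, by
    have hz := zigzag_le h i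
    have hb := scaleBit_lt_two (2 * h) i
    omega⟩

theorem zigzagWord_div_two (h i : ℕ) : (zigzagWord h i).val / 2 = zigzag h i := by
  have hb := scaleBit_lt_two (2 * h) i
  simp only [zigzagWord]
  omega

theorem zigzagWord_mod_two (h i : ℕ) : (zigzagWord h i).val % 2 = scaleBit (2 * h) i := by
  have hb := scaleBit_lt_two (2 * h) i
  simp only [zigzagWord]
  omega

theorem ZiminEncountered.of_encounters_zigzagWord {Y : Type*} [DecidableEq Y] {u : List Y}
    {h N : ℕ} (hh : u.toFinset.card < h)
    (hu : Encounters u ((List.range N).map (zigzagWord h))) : ZiminEncountered u := by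
  obtain ⟨ℓ, p, hℓ, hf⟩ := exists_consistent_of_encounters hu
  have hz : Consistent ℓ p u (zigzag h) := by
    simpa only [zigzagWord_div_two] using hf.comp (·.val / 2)
  have hb : Consistent ℓ p u (scaleBit (2 * h)) := by
    simpa only [zigzagWord_mod_two] using hf.comp (·.val % 2)
  exact ZiminEncountered.of_consistent hh hℓ hz hb

theorem avoidable_on_two_alpha_add_four_general {Y : Type*} [DecidableEq Y] {u : List Y}
    (hnb : ¬ Blocking u) : NAvoidable u (2 * u.toFinset.card + 4) ∧
      sInf {n : ℕ | NAvoidable u n} ≤ 2 * u.toFinset.card + 4 := by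
  have havoid : NAvoidable u (2 * u.toFinset.card + 4) := by
    refine Set.infinite_of_injective_forall_mem
      (f := fun N => (List.range N).map (zigzagWord (u.toFinset.card + 1))) (fun M N hMN => ?_)
      fun N hN => hnb
        (ZiminEncountered.of_encounters_zigzagWord (Nat.lt_succ_self u.toFinset.card) hN).blocking
    simpa only [List.length_map, List.length_range] using congrArg List.length hMN
  exact ⟨havoid, Nat.sInf_le havoid⟩

/-- The number of distinct letters of `u` is `u.toFinset.card = α(u)`.
Every non-blocking pattern `u` is `(2·α(u)+4)`-avoidable; in particular
`m(u)`, the least `n` such that `u` is `n`-avoidable, satisfies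
`m(u) ≤ 2·α(u)+4`. -/
theorem avoidable_on_two_alpha_add_four (u : List ℕ) (hu : u ≠ []) (hnb : ¬ Blocking u) :
    NAvoidable u (2 * u.toFinset.card + 4) ∧
    sInf {n : ℕ | NAvoidable u n} ≤ 2 * u.toFinset.card + 4 :=
  avoidable_on_two_alpha_add_four_general hnb
end

section
/- (Lemma 1(c)) Let k be a positive integer divisible by 4. For any i, j ∈ {1,...,k}, any nonempty suffix b₂ of a_i and any nonempty prefix c₁ of a_j, the adjacency word b₂c₁ is not a factor of a_m for any m ∈ {1,...,k}. -/
/-- The cycle `(1,3,5,...,k-1)` on `{1,...,k}` (as a function on `ℕ`,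
fixing everything else in `{1,...,k}`). -/
def f1 (k : ℕ) : ℕ → ℕ := fun j => if j % 2 = 1 then (if j + 2 ≤ k then j + 2 else 1) else j

/-- The cycle `(2,6,10,...,k-2)` on `{1,...,k}`. -/
def g1 (k : ℕ) : ℕ → ℕ := fun j => if j % 4 = 2 then (if j + 4 ≤ k then j + 4 else 2) else j

/-- The `k` permutations `v_1,...,v_k` of `{1,...,k}`:
`v_j = f_j = f1^j` for `1 ≤ j ≤ k/2` and `v_{k/2+j} = g_j = g1 ∘ f1^(j-1)` for `1 ≤ j ≤ k/2`. -/
def v (k i : ℕ) : ℕ → ℕ :=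
  if i ≤ k / 2 then (f1 k)^[i] else g1 k ∘ (f1 k)^[i - k / 2 - 1]

/-- The word `a_i = x_{v_i(1)} x_{v_i(2)} ... x_{v_i(k)}` over the alphabet
`X = {x_1,...,x_k}`, where the letter `x_p` is encoded by its index `p : ℕ`. -/
def aw (k i : ℕ) : List ℕ := (List.range k).map (fun p => v k i (p + 1))

/-- The words `J_1 = a_1`, `J_{m+1} = φ₀(J_m)` where `φ₀(x_i) = a_i` letterwise;
`Jw k m` is `J_{m+1}`, so `Jw k` enumerates `J_1, J_2, ...`. -/
def Jw (k : ℕ) : ℕ → List ℕ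
  | 0 => aw k 1
  | m + 1 => (Jw k m).flatMap (aw k)

/-!
When `4 ∣ k`, the index `k` lies on neither cycle: `f1` moves only odd numbers and `g1` only numbers
congruent to `2` modulo `4`. So every `v_i` fixes `k`, and `x_k` is the last letter of every `a_i`
and occurs nowhere else in it. In `b₂c₁` the last letter `x_k` of `b₂` is followed by a letter of
`c₁`, which never happens inside `a_m`.
-/

theorem not_append_infix_of_notMem_dropLast {α : Type*} {w b c : List α} {x : α}
    (hw : x ∉ w.dropLast) (hb : x ∈ b) (hc : c ≠ []) : ¬ b ++ c <:+: w := by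
  rintro ⟨s, t, rfl⟩
  have hct : c ++ t ≠ [] := List.append_ne_nil_of_left_ne_nil hc t
  have hassoc : s ++ (b ++ c) ++ t = (s ++ b) ++ (c ++ t) := by simp only [List.append_assoc]
  rw [hassoc, List.dropLast_append_of_ne_nil hct] at hw
  exact hw (List.mem_append_left _ (List.mem_append_right s hb))

theorem preimage_f1_singleton {k : ℕ} (hk : 2 ∣ k) : f1 k ⁻¹' {k} = {k} := by
  ext p
  simp only [Set.mem_preimage, Set.mem_singleton_iff, f1]
  split_ifs <;> omega

theorem preimage_g1_singleton {k : ℕ} (hk : k % 4 ≠ 2) : g1 k ⁻¹' {k} = {k} := by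
  ext p
  simp only [Set.mem_preimage, Set.mem_singleton_iff, g1]
  split_ifs <;> omega

theorem preimage_v_singleton {k : ℕ} (h4 : 4 ∣ k) (i : ℕ) : v k i ⁻¹' {k} = {k} := by
  have hf (n : ℕ) : (f1 k)^[n] ⁻¹' {k} = {k} :=
    Function.IsFixedPt.preimage_iterate (preimage_f1_singleton (by omega)) n
  unfold v
  split_ifs
  · exact hf i
  · rw [Set.preimage_comp, preimage_g1_singleton (by omega), hf]

theorem v_eq_self_iff {k : ℕ} (h4 : 4 ∣ k) (i p : ℕ) : v k i p = k ↔ p = k :=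
  Set.ext_iff.mp (preimage_v_singleton h4 i) p

theorem getLast_aw {k : ℕ} (h4 : 4 ∣ k) (i : ℕ) (h : aw k i ≠ []) : (aw k i).getLast h = k := by
  have hk : k ≠ 0 := fun hk => h (by simp [aw, hk])
  simp only [aw, List.getLast_map, List.getLast_range, v_eq_self_iff h4]
  omega

theorem notMem_dropLast_aw {k : ℕ} (h4 : 4 ∣ k) (i : ℕ) : k ∉ (aw k i).dropLast := by
  rw [aw, ← List.map_dropLast, List.dropLast_eq_take, List.length_range, List.take_range]
  simp only [List.mem_map, List.mem_range, v_eq_self_iff h4]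
  rintro ⟨p, hp, hpk⟩
  omega

theorem adjacent_not_factor_general {k : ℕ} (h4 : 4 ∣ k) (i m : ℕ) {b₂ c₁ : List ℕ}
    (hb : b₂ <:+ aw k i) (hb0 : b₂ ≠ []) (hc0 : c₁ ≠ []) : ¬ (b₂ ++ c₁) <:+: aw k m := by
  have hlast : b₂.getLast hb0 = k := by rw [hb.getLast hb0, getLast_aw h4]
  have hmem : k ∈ b₂ := hlast ▸ List.getLast_mem hb0
  exact not_append_infix_of_notMem_dropLast (notMem_dropLast_aw h4 m) hmem hc0

/-- (Lemma 1(c)) For `i, j, m ∈ {1,...,k}`, no adjacent word — the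
concatenation `b₂ ++ c₁` of a nonempty suffix `b₂` of `a_i` with a nonempty
prefix `c₁` of `a_j` — is a factor of `a_m`. -/
theorem adjacent_not_factor (k : ℕ) (hk : 0 < k) (h4 : 4 ∣ k)
    (i j m : ℕ) (hi : i ∈ Finset.Icc 1 k) (hj : j ∈ Finset.Icc 1 k)
    (hm : m ∈ Finset.Icc 1 k)
    (b₂ c₁ : List ℕ) (hb : b₂ <:+ aw k i) (hc : c₁ <+: aw k j)
    (hb0 : b₂ ≠ []) (hc0 : c₁ ≠ []) :
    ¬ (b₂ ++ c₁) <:+: aw k m :=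
  adjacent_not_factor_general h4 i m hb hb0 hc0
end
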